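/- Let n ≥ 1, let ω ⊆ ℝⁿ be a nonempty open set and T > 0. Let u : ℝ × ℝⁿ → ℝ be of class C² on [0,T]×ℝⁿ and satisfy ∂ₜ²u(t,x) = Δu(t,x) for all (t,x) ∈ [0,T]×ℝⁿ, u(0,x) = 0 for all x ∈ ℝⁿ, and ∂ₜu(t,x) = 0 for all t ∈ (0,T) and x ∈ ω. Then ∂ₜu(0,x) = 0 for every x ∈ ℝⁿ with dist(x,ω) < T, where dist denotes the Euclidean distance to the set ω. -/

import Mathlib

open MeasureTheory

/-- Partial derivative in time of a function of (time, space). -/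
noncomputable def pdt {n : ℕ} (u : ℝ → EuclideanSpace ℝ (Fin n) → ℝ) :
    ℝ → EuclideanSpace ℝ (Fin n) → ℝ := fun t x => deriv (fun s => u s x) t

/-- The Euclidean Laplacian of `f` at `x`, as the sum of the second derivatives
along the coordinate directions. -/
noncomputable def lap {n : ℕ} (f : EuclideanSpace ℝ (Fin n) → ℝ)
    (x : EuclideanSpace ℝ (Fin n)) : ℝ :=
  ∑ i, iteratedFDeriv ℝ 2 f x ![EuclideanSpace.single i 1, EuclideanSpace.single i 1]

open Set Metric Filter Topology

abbrev EE (n : ℕ) := EuclideanSpace ℝ (Fin n)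

noncomputable abbrev sph (n : ℕ) : Measure (sphere (0 : EE n) 1) :=
  (volume : Measure (EE n)).toSphere

lemma hasDerivAt_int {X : Type*} [TopologicalSpace X] [CompactSpace X] [MeasurableSpace X]
    [BorelSpace X] (μ : Measure X) [IsFiniteMeasure μ] (g g' : ℝ → X → ℝ) (s : Set ℝ)
    (hs : IsOpen s) (t0 : ℝ) (ht0 : t0 ∈ s)
    (hg : ContinuousOn (Function.uncurry g) (s ×ˢ univ))
    (hg' : ContinuousOn (Function.uncurry g') (s ×ˢ univ))
    (hd : ∀ t ∈ s, ∀ x, HasDerivAt (fun t => g t x) (g' t x) t) :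
    HasDerivAt (fun t => ∫ x, g t x ∂μ) (∫ x, g' t0 x ∂μ) t0 := by
  have hc : ∀ t ∈ s, Continuous (g t) := by
    intro t ht
    rw [← continuousOn_univ]
    exact hg.comp (f := fun x => (t, x)) (by fun_prop) (fun x _ => ⟨ht, mem_univ _⟩)
  have hc' : ∀ t ∈ s, Continuous (g' t) := by
    intro t ht
    rw [← continuousOn_univ]
    exact hg'.comp (f := fun x => (t, x)) (by fun_prop) (fun x _ => ⟨ht, mem_univ _⟩)
  obtain ⟨ε, hε, hεs⟩ := Metric.nhds_basis_closedBall.mem_iff.1 (hs.mem_nhds ht0)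
  have hK : IsCompact (closedBall t0 ε ×ˢ (univ : Set X)) :=
    (isCompact_closedBall t0 ε).prod isCompact_univ
  obtain ⟨C, hC⟩ := hK.exists_bound_of_continuousOn
    (hg'.mono (prod_mono hεs subset_rfl))
  refine (hasDerivAt_integral_of_dominated_loc_of_deriv_le (s := closedBall t0 ε)
    (bound := fun _ => C) (F' := g') (closedBall_mem_nhds t0 hε) ?_ ?_ ?_ ?_ ?_ ?_).2
  · filter_upwards [hs.mem_nhds ht0] with t ht
    exact (hc t ht).aestronglyMeasurable_of_compactSpace
  · exact (hc t0 ht0).integrable_of_hasCompactSupport (HasCompactSupport.of_compactSpace _)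
  · exact (hc' t0 ht0).aestronglyMeasurable_of_compactSpace
  · exact Eventually.of_forall fun x t ht => hC (t, x) ⟨ht, mem_univ _⟩
  · exact integrable_const _
  · exact Eventually.of_forall fun x t ht => hd t (hεs ht) x

lemma integrable_cpt {X : Type*} [TopologicalSpace X] [CompactSpace X] [MeasurableSpace X]
    [BorelSpace X] (μ : Measure X) [IsFiniteMeasure μ] {f : X → ℝ} (hf : Continuous f) :
    Integrable f μ :=
  hf.integrable_of_hasCompactSupport (HasCompactSupport.of_compactSpace _)

/-- action of a linear isometry on the sphere -/
noncomputable def rotS {n : ℕ} (R : EE n ≃ₗᵢ[ℝ] EE n) (σ : sphere (0 : EE n) 1) : sphere (0 : EE n) 1 :=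
  ⟨R σ, by simp⟩

lemma continuous_rotS {n : ℕ} (R : EE n ≃ₗᵢ[ℝ] EE n) : Continuous (rotS R) := by
  unfold rotS
  exact Continuous.subtype_mk (R.continuous.comp continuous_subtype_val) _

open scoped Pointwise in
lemma mp_rotS {n : ℕ} (R : EE n ≃ₗᵢ[ℝ] EE n) : MeasurePreserving (rotS R) (sph n) (sph n) := by
  refine ⟨(continuous_rotS R).measurable, ?_⟩
  ext s hs
  rw [Measure.map_apply (continuous_rotS R).measurable hs, Measure.toSphere_apply' _ hs,
    Measure.toSphere_apply' _ ((continuous_rotS R).measurable hs)]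
  congr 1
  conv_rhs => rw [← (R.measurePreserving).measure_preimage_equiv (f := R.toMeasurableEquiv)]
  congr 1
  ext x
  simp only [Set.mem_smul, mem_image, mem_preimage]
  constructor
  · rintro ⟨t, ht, _, ⟨σ, hσ, rfl⟩, rfl⟩
    exact ⟨t, ht, _, ⟨rotS R σ, hσ, rfl⟩, by simp [rotS]⟩
  · rintro ⟨t, ht, _, ⟨σ, hσ, rfl⟩, h⟩
    refine ⟨t, ht, _, ⟨rotS R.symm σ, ?_, rfl⟩, ?_⟩
    · simpa [rotS] using hσ
    · apply R.injective
      simpa [rotS] using h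

lemma integral_rotS {n : ℕ} (R : EE n ≃ₗᵢ[ℝ] EE n) (g : EE n → ℝ) (hg : Continuous g) :
    ∫ σ, g (R σ) ∂(sph n) = ∫ σ, g σ ∂(sph n) := by
  conv_rhs => rw [← (mp_rotS R).map_eq]
  rw [integral_map (continuous_rotS R).aemeasurable]
  · rfl
  · exact (hg.comp continuous_subtype_val).aestronglyMeasurable_of_compactSpace

noncomputable def expRot {n : ℕ} (A : EE n →L[ℝ] EE n) (hA : ∀ x y, inner ℝ (A x) y = - inner ℝ x (A y)) (θ : ℝ) :
    EE n ≃ₗᵢ[ℝ] EE n :=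
  LinearIsometry.toLinearIsometryEquiv
   ⟨(NormedSpace.exp (θ • A) : EE n →L[ℝ] EE n).toLinearMap, by
    intro x
    have h1 : A ∈ skewAdjoint (EE n →L[ℝ] EE n) := by
      rw [skewAdjoint.mem_iff, ContinuousLinearMap.star_eq_adjoint]
      symm
      rw [ContinuousLinearMap.eq_adjoint_iff]
      intro x y
      simp [hA x y]
    let _ : NormedAlgebra ℚ (EE n →L[ℝ] EE n) := NormedAlgebra.restrictScalars ℚ ℝ _
    have h2 := NormedSpace.exp_mem_unitary_of_mem_skewAdjoint (skewAdjoint.smul_mem θ h1)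
    exact ((ContinuousLinearMap.norm_map_iff_adjoint_comp_self _).2 h2.1) x⟩ rfl

lemma expRot_apply {n : ℕ} (A : EE n →L[ℝ] EE n) (hA : ∀ x y, inner ℝ (A x) y = - inner ℝ x (A y)) (θ : ℝ) (x : EE n) :
    expRot A hA θ x = (NormedSpace.exp (θ • A) : EE n →L[ℝ] EE n) x := rfl

lemma integral_skew {n : ℕ} (A : EE n →L[ℝ] EE n)
    (hA : ∀ x y, inner ℝ (A x) y = - inner ℝ x (A y)) (g : EE n → ℝ) (hg : ContDiff ℝ 1 g) :
    ∫ σ, fderiv ℝ g (σ : EE n) (A σ) ∂(sph n) = 0 := by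
  have hexp : ∀ θ : ℝ, HasDerivAt (fun u : ℝ => (NormedSpace.exp (u • A) : EE n →L[ℝ] EE n))
    (NormedSpace.exp (θ • A) * A) θ := fun θ => hasDerivAt_exp_smul_const A θ
  have hcexp : Continuous (fun u : ℝ => (NormedSpace.exp (u • A) : EE n →L[ℝ] EE n)) :=
    continuous_iff_continuousAt.2 fun θ => (hexp θ).continuousAt
  have hrot : ∀ θ : ℝ, ∫ σ : sphere (0 : EE n) 1,
      g ((NormedSpace.exp (θ • A) : EE n →L[ℝ] EE n) σ) ∂(sph n) =
      ∫ σ : sphere (0 : EE n) 1, g σ ∂(sph n) :=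
    fun θ => integral_rotS (expRot A hA θ) g hg.continuous
  have h0 : (NormedSpace.exp ((0 : ℝ) • A) : EE n →L[ℝ] EE n) = 1 := by
    have hz : (0 : ℝ) • A = 0 := by ext; simp
    rw [hz]; exact NormedSpace.exp_zero
  generalize hee : (fun u : ℝ => (NormedSpace.exp (u • A) : EE n →L[ℝ] EE n)) = e at hexp hcexp
  have hee' : ∀ θ, (NormedSpace.exp (θ • A) : EE n →L[ℝ] EE n) = e θ := fun θ => by rw [← hee]
  simp only [hee'] at hexp hrot h0
  have hgc := hg.continuous
  have hfc := hg.continuous_fderiv one_ne_zero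
  have c1 : Continuous (fun p : ℝ × sphere (0 : EE n) 1 => e p.1 (p.2 : EE n)) :=
    (hcexp.comp continuous_fst).clm_apply (continuous_subtype_val.comp continuous_snd)
  have c2 : Continuous (fun p : ℝ × sphere (0 : EE n) 1 => e p.1 (A (p.2 : EE n))) :=
    (hcexp.comp continuous_fst).clm_apply
      (A.continuous.comp (continuous_subtype_val.comp continuous_snd))
  have key := hasDerivAt_int (sph n)
    (fun θ σ => g (e θ σ))
    (fun θ σ => fderiv ℝ g (e θ σ) ((e θ * A) σ)) univ isOpen_univ 0 (mem_univ _)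
    (hgc.comp c1).continuousOn
    ((hfc.comp c1).clm_apply c2).continuousOn
    (by
      intro t _ x
      have h1 := ((hexp t).clm_apply (hasDerivAt_const t (x : EE n)))
      simp only [map_zero, add_zero] at h1
      exact ((hg.differentiable one_ne_zero _).hasFDerivAt).comp_hasDerivAt t h1)
  simp only [hrot] at key
  have := key.unique (hasDerivAt_const _ _)
  simpa [h0] using this

noncomputable def eb {n : ℕ} (i : Fin n) : EE n := EuclideanSpace.single i 1

noncomputable def skA {n : ℕ} (i j : Fin n) : EE n →L[ℝ] EE n :=
  (EuclideanSpace.proj i : EE n →L[ℝ] ℝ).smulRight (eb j) -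
  (EuclideanSpace.proj j : EE n →L[ℝ] ℝ).smulRight (eb i)

lemma skA_apply {n : ℕ} (i j : Fin n) (x : EE n) : skA i j x = x i • eb j - x j • eb i := by
  simp [skA]

lemma skA_skew {n : ℕ} (i j : Fin n) (x y : EE n) :
    inner ℝ (skA i j x) y = - inner ℝ x (skA i j y) := by
  rw [skA_apply, skA_apply]
  simp only [eb, inner_sub_left, inner_sub_right, inner_smul_left, inner_smul_right,
    EuclideanSpace.inner_single_left, EuclideanSpace.inner_single_right]
  simp
  ring

lemma sum_eb {n : ℕ} (x : EE n) : ∑ i, x i • eb i = x := by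
  have := (EuclideanSpace.basisFun (Fin n) ℝ).sum_repr x
  simpa [eb] using this

lemma norm_sq_eb {n : ℕ} (x : EE n) : ∑ i, x i * x i = ‖x‖ ^ 2 := by
  rw [EuclideanSpace.norm_sq_eq]
  simp [sq]

lemma sum_bilin {n : ℕ} (B : EE n →L[ℝ] EE n →L[ℝ] ℝ) (x : EE n) :
    ∑ i, ∑ j, B (skA i j x) (skA i j x) = 2 * ‖x‖ ^ 2 * (∑ i, B (eb i) (eb i)) - 2 * B x x := by
  have hx : B x x = ∑ i, ∑ j, x i * x j * B (eb i) (eb j) := by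
    conv_lhs => rw [← sum_eb x]
    simp only [map_sum, map_smul, sum_apply, smul_apply, smul_eq_mul,
      Finset.mul_sum]
    rw [Finset.sum_comm]
    refine Finset.sum_congr rfl fun i _ => Finset.sum_congr rfl fun j _ => by ring
  have hx' : B x x = ∑ i, ∑ j, x j * x i * B (eb j) (eb i) := by
    rw [hx, Finset.sum_comm]
  have h1 : ‖x‖ ^ 2 * (∑ i, B (eb i) (eb i)) = ∑ i, ∑ j, x i * x i * B (eb j) (eb j) := by
    rw [← norm_sq_eb, Finset.sum_mul_sum]
  have h2 : ‖x‖ ^ 2 * (∑ i, B (eb i) (eb i)) = ∑ i, ∑ j, x j * x j * B (eb i) (eb i) := by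
    rw [h1, Finset.sum_comm]
  calc _ = ∑ i, ∑ j, (x i * x i * B (eb j) (eb j) + x j * x j * B (eb i) (eb i)
        - x i * x j * B (eb i) (eb j) - x j * x i * B (eb j) (eb i)) := by
        refine Finset.sum_congr rfl fun i _ => Finset.sum_congr rfl fun j _ => ?_
        rw [skA_apply]
        simp only [map_sub, map_smul, sub_apply, smul_apply, smul_eq_mul]
        ring
    _ = _ := by
        simp only [Finset.sum_sub_distrib, Finset.sum_add_distrib]
        rw [← h1, ← h2, ← hx, ← hx']; ring

lemma sum_skA_sq {n : ℕ} (x : EE n) :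
    ∑ i, ∑ j, skA i j (skA i j x) = (-(2 * ((n : ℝ) - 1))) • x := by
  have h : ∀ i j : Fin n, skA i j (skA i j x) =
      ((if i = j then (x i) • eb i else 0) - x j • eb j) - (x i • eb i -
        (if i = j then (x i) • eb i else 0)) := by
    intro i j
    simp only [skA_apply]
    by_cases hij : i = j
    · subst hij; simp
    · have hji : ¬ j = i := fun h => hij h.symm
      simp [eb, hij, hji]
  simp only [h, Finset.sum_sub_distrib, Finset.sum_ite_eq, Finset.mem_univ, if_true, sum_eb,
    Finset.sum_const, Finset.card_univ, Fintype.card_fin, ← Finset.smul_sum]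
  rw [← Nat.cast_smul_eq_nsmul ℝ]
  module

lemma darboux1 {n : ℕ} (G : EE n → ℝ) (hG : ContDiff ℝ 2 G) :
    ∫ σ : sphere (0 : EE n) 1, ((∑ i, fderiv ℝ (fderiv ℝ G) (σ : EE n) (eb i) (eb i)) -
      fderiv ℝ (fderiv ℝ G) (σ : EE n) σ σ - ((n : ℝ) - 1) * fderiv ℝ G (σ : EE n) σ) ∂(sph n) = 0 := by
  have hD : ContDiff ℝ 1 (fderiv ℝ G) := hG.fderiv_right (by norm_num)
  have hDc : Continuous (fderiv ℝ G) := hD.continuous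
  have hD2c : Continuous (fderiv ℝ (fderiv ℝ G)) := hD.continuous_fderiv one_ne_zero
  have key : ∀ i j : Fin n, ∫ σ : sphere (0 : EE n) 1,
      (fderiv ℝ (fderiv ℝ G) (σ : EE n) (skA i j σ) (skA i j σ) +
        fderiv ℝ G (σ : EE n) (skA i j (skA i j σ))) ∂(sph n) = 0 := by
    intro i j
    have h1 := integral_skew (skA i j) (skA_skew i j) (fun x => fderiv ℝ G x (skA i j x))
      (hD.clm_apply (skA i j).contDiff)
    rw [← h1]
    congr 1
    funext σ
    have h2 : HasFDerivAt (fun x => fderiv ℝ G x (skA i j x)) _ (σ : EE n) :=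
      ((hD.differentiable one_ne_zero (σ : EE n)).hasFDerivAt).clm_apply (skA i j).hasFDerivAt
    rw [h2.fderiv]
    simp [add_comm]
  have hint : ∀ i j : Fin n, Integrable (fun σ : sphere (0 : EE n) 1 =>
      (fderiv ℝ (fderiv ℝ G) (σ : EE n) (skA i j σ) (skA i j σ) +
        fderiv ℝ G (σ : EE n) (skA i j (skA i j σ)))) (sph n) := by
    intro i j
    apply integrable_cpt
    fun_prop
  have hsum : ∫ σ : sphere (0 : EE n) 1, ∑ i, ∑ j, 
      (fderiv ℝ (fderiv ℝ G) (σ : EE n) (skA i j σ) (skA i j σ) +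
        fderiv ℝ G (σ : EE n) (skA i j (skA i j σ))) ∂(sph n) = 0 := by
    rw [integral_finsetSum _ (fun i _ => integrable_finsetSum _ (fun j _ => hint i j))]
    refine Finset.sum_eq_zero fun i _ => ?_
    rw [integral_finsetSum _ (fun j _ => hint i j)]
    exact Finset.sum_eq_zero fun j _ => key i j
  have h3 : ∀ σ : sphere (0 : EE n) 1, ∑ i, ∑ j, 
      (fderiv ℝ (fderiv ℝ G) (σ : EE n) (skA i j σ) (skA i j σ) +
        fderiv ℝ G (σ : EE n) (skA i j (skA i j σ))) = 
      2 * ((∑ i, fderiv ℝ (fderiv ℝ G) (σ : EE n) (eb i) (eb i)) -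
      fderiv ℝ (fderiv ℝ G) (σ : EE n) σ σ - ((n : ℝ) - 1) * fderiv ℝ G (σ : EE n) σ) := by
    intro σ
    have hσ : ‖(σ : EE n)‖ = 1 := by simp
    simp only [Finset.sum_add_distrib]
    rw [sum_bilin]
    simp only [← map_sum]
    rw [sum_skA_sq, hσ]
    simp only [map_smul, smul_eq_mul]
    ring
  simp only [h3, integral_const_mul] at hsum
  linarith

lemma darboux {n : ℕ} (f : EE n → ℝ) (hf : ContDiff ℝ 2 f) (y : EE n) (r : ℝ) (hr : r ≠ 0) :
    ∫ σ : sphere (0 : EE n) 1, (fderiv ℝ (fderiv ℝ f) (y + r • (σ : EE n)) σ σ -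
      (∑ i, fderiv ℝ (fderiv ℝ f) (y + r • (σ : EE n)) (eb i) (eb i))) ∂(sph n) =
    - (((n : ℝ) - 1) / r) * ∫ σ : sphere (0 : EE n) 1, fderiv ℝ f (y + r • (σ : EE n)) σ ∂(sph n) := by
  have hD : ContDiff ℝ 1 (fderiv ℝ f) := hf.fderiv_right (by norm_num)
  have hDc : Continuous (fderiv ℝ f) := hD.continuous
  have hD2c : Continuous (fderiv ℝ (fderiv ℝ f)) := hD.continuous_fderiv one_ne_zero
  have haff : ∀ x : EE n, HasFDerivAt (fun x => y + r • x) (r • ContinuousLinearMap.id ℝ (EE n)) x :=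
    fun x => ((hasFDerivAt_id x).const_smul r).const_add y
  have e1 : fderiv ℝ (fun x => f (y + r • x)) = fun x => r • fderiv ℝ f (y + r • x) := by
    funext x
    have := ((hf.differentiable two_ne_zero (y + r • x)).hasFDerivAt).comp x (haff x)
    rw [show (fun x => f (y + r • x)) = f ∘ (fun x => y + r • x) from rfl, this.fderiv]
    ext v; simp
  have e2 : ∀ x, fderiv ℝ (fderiv ℝ (fun x => f (y + r • x))) x = (r * r) • fderiv ℝ (fderiv ℝ f) (y + r • x) := by
    intro x
    rw [e1]
    have := (((hD.differentiable one_ne_zero (y + r • x)).hasFDerivAt).comp x (haff x)).const_smul r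
    rw [show (fun x => r • fderiv ℝ f (y + r • x)) = r • ((fderiv ℝ f) ∘ (fun x => y + r • x)) from rfl, this.fderiv]
    ext v w; simp; ring
  have h := darboux1 (fun x => f (y + r • x)) (hf.comp (by fun_prop))
  simp only [e2] at h
  simp only [e1, smul_apply, smul_eq_mul, ← Finset.mul_sum] at h
  have h' : ∫ σ : sphere (0 : EE n) 1, ((-(r * r)) * (fderiv ℝ (fderiv ℝ f) (y + r • (σ : EE n)) σ σ -
      (∑ i, fderiv ℝ (fderiv ℝ f) (y + r • (σ : EE n)) (eb i) (eb i))) - 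
      (((n : ℝ) - 1) * r) * fderiv ℝ f (y + r • (σ : EE n)) σ) ∂(sph n) = 0 := by
    rw [← h]; congr 1; funext σ; ring
  rw [integral_sub, integral_const_mul, integral_const_mul] at h'
  · field_simp
    have : r * (r * (∫ σ : sphere (0 : EE n) 1, (fderiv ℝ (fderiv ℝ f) (y + r • (σ : EE n)) σ σ -
      (∑ i, fderiv ℝ (fderiv ℝ f) (y + r • (σ : EE n)) (eb i) (eb i))) ∂(sph n))) = 
      r * (-((n - 1) * ∫ σ : sphere (0 : EE n) 1, fderiv ℝ f (y + r • (σ : EE n)) σ ∂(sph n))) := by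
      linarith
    have := mul_left_cancel₀ hr this
    linarith
  · apply integrable_cpt; fun_prop
  · apply integrable_cpt; fun_prop

def MZ {n : ℕ} (ω : Set (EE n)) (T : ℝ) (f : EE n → ℝ) : Prop :=
  ∀ y ∈ ω, ∀ ψ : ℝ → ℝ, Continuous ψ → ∀ R, 0 < R → R < T → (∀ s, R ^ 2 ≤ s → ψ s = 0) →
    ∫ z, f z * ψ (‖z - y‖ ^ 2) = 0

lemma cpt_psi {n : ℕ} (f : EE n → ℝ) (y : EE n) (ψ : ℝ → ℝ) (R : ℝ) (hR : 0 < R)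
    (hψ0 : ∀ s, R ^ 2 ≤ s → ψ s = 0) : HasCompactSupport (fun z => f z * ψ (‖z - y‖ ^ 2)) := by
  apply HasCompactSupport.intro (isCompact_closedBall y R)
  intro x hx
  rw [mem_closedBall, not_le, dist_eq_norm] at hx
  rw [hψ0 _ (by gcongr), mul_zero]

lemma integrable_psi {n : ℕ} (f : EE n → ℝ) (hf : Continuous f) (y : EE n) (ψ : ℝ → ℝ)
    (hψ : Continuous ψ) (R : ℝ) (hR : 0 < R)
    (hψ0 : ∀ s, R ^ 2 ≤ s → ψ s = 0) : Integrable (fun z => f z * ψ (‖z - y‖ ^ 2)) :=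
  Continuous.integrable_of_hasCompactSupport (by fun_prop) (cpt_psi f y ψ R hR hψ0)

open scoped Convolution in
lemma MZ_linear {n : ℕ} (ω : Set (EE n)) (hω : IsOpen ω) (T : ℝ) (f : EE n → ℝ)
    (hf : Continuous f) (h : MZ ω T f) (v : EE n) : MZ ω T (fun z => inner ℝ z v * f z) := by
  intro y hy ψ hψ R hR hRT hψ0
  set φ : ℝ → ℝ := fun s => ∫ x in (R ^ 2)..s, ψ x with hφ
  have hφd : ∀ s, HasDerivAt φ (ψ s) s := fun s =>
    intervalIntegral.integral_hasDerivAt_right (hψ.intervalIntegrable _ _)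
      (hψ.stronglyMeasurableAtFilter _ _) hψ.continuousAt
  have hφ0 : ∀ s, R ^ 2 ≤ s → φ s = 0 := by
    intro s hs
    rw [hφ]
    simp only
    rw [intervalIntegral.integral_congr (g := fun _ => 0), intervalIntegral.integral_zero]
    intro x hx
    rw [uIcc_of_le hs] at hx
    exact hψ0 x hx.1
  have hφc : ContDiff ℝ 1 φ := by
    rw [contDiff_one_iff_deriv]
    refine ⟨fun s => (hφd s).differentiableAt, ?_⟩
    rw [show deriv φ = ψ from funext fun s => (hφd s).deriv]
    exact hψ
  set g : EE n → ℝ := fun x => φ (‖x‖ ^ 2) with hg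
  have hgc : ContDiff ℝ 1 g := hφc.comp (contDiff_norm_sq ℝ)
  have hgs : HasCompactSupport g := by
    apply HasCompactSupport.intro (isCompact_closedBall 0 R)
    intro x hx
    rw [mem_closedBall, not_le, dist_zero_right] at hx
    exact hφ0 _ (by gcongr)
  have hgd : ∀ x w : EE n, fderiv ℝ g x w = 2 * (inner ℝ x w * ψ (‖x‖ ^ 2)) := by
    intro x w
    have h1 : HasFDerivAt (fun x : EE n => ‖x‖ ^ 2) _ x := (hasStrictFDerivAt_norm_sq x).hasFDerivAt
    have h2 := (hφd (‖x‖ ^ 2)).comp_hasFDerivAt x h1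
    have h3 : fderiv ℝ g x = _ := h2.fderiv
    rw [h3]
    simp
    ring
  have hconv := hgs.hasFDerivAt_convolution_right (ContinuousLinearMap.mul ℝ ℝ) 
    (hf.locallyIntegrable (μ := volume)) hgc y
  have hzero : (f ⋆[ContinuousLinearMap.mul ℝ ℝ, volume] g) =ᶠ[𝓝 y] fun _ => 0 := by
    filter_upwards [hω.mem_nhds hy] with y' hy'
    rw [convolution_def, ← h y' hy' φ hφc.continuous R hR hRT hφ0]
    congr 1
    funext z
    simp [hg, norm_sub_rev]
  have h0 := (hconv.congr_of_eventuallyEq hzero.symm).unique (hasFDerivAt_const (0 : ℝ) y)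
  have h1 : ((f ⋆[(ContinuousLinearMap.mul ℝ ℝ).precompR (EE n), volume] fderiv ℝ g) y) v = 0 := by
    rw [h0]; rfl
  rw [convolution_precompR_apply _ (hf.locallyIntegrable (μ := volume)) 
    (hgs.fderiv ℝ) (hgc.continuous_fderiv one_ne_zero)] at h1
  rw [convolution_def] at h1
  have h2 := h y hy ψ hψ R hR hRT hψ0
  have e : ∀ z, inner ℝ z v * f z * ψ (‖z - y‖ ^ 2) = inner ℝ y v * (f z * ψ (‖z - y‖ ^ 2)) -
      (1 / 2) * (ContinuousLinearMap.mul ℝ ℝ (f z)) (fderiv ℝ g (y - z) v) := by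
    intro z
    rw [hgd, norm_sub_rev, inner_sub_left]
    simp
    ring
  have hi2 : Integrable (fun z => (ContinuousLinearMap.mul ℝ ℝ (f z)) (fderiv ℝ g (y - z) v)) := by
    have := integrable_psi (fun z => 2 * (f z * (inner ℝ (y - z) v))) (by fun_prop) y ψ hψ R hR hψ0
    refine this.congr (Eventually.of_forall fun z => ?_)
    simp only [hgd, norm_sub_rev]
    simp
    ring
  simp only [e]
  rw [integral_sub ((integrable_psi f hf y ψ hψ R hR hψ0).const_mul _) (hi2.const_mul _),
    integral_const_mul, integral_const_mul, h1, h2]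
  simp

def MZalg {n : ℕ} (ω : Set (EE n)) (T : ℝ) : Subalgebra ℝ C(EE n, ℝ) where
  carrier := {p | ∀ f : EE n → ℝ, Continuous f → MZ ω T f → MZ ω T (fun z => p z * f z)}
  mul_mem' := by
    intro p q hp hq f hf h
    have := hp _ (q.continuous.mul hf) (hq f hf h)
    simpa [mul_assoc] using this
  add_mem' := by
    intro p q hp hq f hf h y hy ψ hψ R hR hRT hψ0
    have h1 := hp f hf h y hy ψ hψ R hR hRT hψ0
    have h2 := hq f hf h y hy ψ hψ R hR hRT hψ0
    have := integral_add (integrable_psi (fun z => p z * f z) (p.continuous.mul hf) y ψ hψ R hR hψ0) 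
      (integrable_psi (fun z => q z * f z) (q.continuous.mul hf) y ψ hψ R hR hψ0)
    rw [h1, h2, add_zero] at this
    rw [← this]
    congr 1
    funext z
    show (p z + q z) * f z * _ = _
    ring
  algebraMap_mem' := by
    intro c f hf h y hy ψ hψ R hR hRT hψ0
    have h1 := h y hy ψ hψ R hR hRT hψ0
    have e : ∀ z : EE n, (algebraMap ℝ C(EE n, ℝ) c) z = c := fun z => rfl
    simp only [e, mul_assoc]
    rw [integral_const_mul, h1, mul_zero]

lemma MZ_zero {n : ℕ} (ω : Set (EE n)) (hω : IsOpen ω) (T : ℝ) (f : EE n → ℝ)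
    (hf : Continuous f) (h : MZ ω T f) (x y : EE n) (hy : y ∈ ω) (hxy : dist x y < T) :
    f x = 0 := by
  obtain ⟨R, hR1, hRT⟩ := exists_between hxy
  have hR : 0 < R := dist_nonneg.trans_lt hR1
  have hsep : (MZalg ω T).SeparatesPoints := by
    intro a b hab
    refine ⟨fun z => inner ℝ z (a - b), ⟨⟨fun z => inner ℝ z (a - b), by fun_prop⟩, ?_, rfl⟩, ?_⟩
    · intro f hf h
      exact MZ_linear ω hω T f hf h _
    · simp only
      rw [← sub_ne_zero, ← inner_sub_left, real_inner_self_eq_norm_sq]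
      have : a - b ≠ 0 := sub_ne_zero.2 hab
      positivity
  set ψ : ℝ → ℝ := fun s => max (R ^ 2 - s) 0 with hψd
  have hψ : Continuous ψ := by fun_prop
  have hψ0 : ∀ s, R ^ 2 ≤ s → ψ s = 0 := fun s hs => max_eq_right (by linarith)
  have hψn : ∀ s, 0 ≤ ψ s := fun s => le_max_right _ _
  set I := ∫ z, |f z| * ψ (‖z - y‖ ^ 2) with hI
  have hI0 : 0 ≤ I := integral_nonneg fun z => mul_nonneg (abs_nonneg _) (hψn _)
  have hle : ∀ δ > 0, ∫ z, (f z * f z) * ψ (‖z - y‖ ^ 2) ≤ δ * I := by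
    intro δ hδ
    obtain ⟨p, hp, hpf⟩ := 
      ContinuousMap.exists_mem_subalgebra_near_continuous_of_isCompact_of_separatesPoints hsep
      ⟨f, hf⟩ (isCompact_closedBall y R) hδ
    have h1 := hp f hf h y hy ψ hψ R hR hRT hψ0
    have i1 := integrable_psi (fun z => f z * f z) (by fun_prop) y ψ hψ R hR hψ0
    have i2 := integrable_psi (fun z => p z * f z) (by fun_prop) y ψ hψ R hR hψ0
    have i3 := integrable_psi (fun z => |f z|) (by fun_prop) y ψ hψ R hR hψ0
    have h2 := integral_sub i1 i2
    rw [h1, sub_zero] at h2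
    rw [← h2, hI, ← integral_const_mul]
    refine integral_mono (i1.sub i2) (i3.const_mul _) fun z => ?_
    simp only
    by_cases hz : z ∈ closedBall y R
    · have h3 := hpf z hz
      rw [Real.norm_eq_abs] at h3
      simp only [ContinuousMap.coe_mk] at h3
      rw [← sub_mul, ← sub_mul, ← mul_assoc]
      refine mul_le_mul_of_nonneg_right ?_ (hψn _)
      calc (f z - p z) * f z ≤ |(f z - p z) * f z| := le_abs_self _
        _ = |p z - f z| * |f z| := by rw [abs_mul, abs_sub_comm]
        _ ≤ δ * |f z| := by gcongr
    · rw [mem_closedBall, not_le, dist_eq_norm] at hz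
      rw [hψ0 _ (by gcongr)]; simp
  have hle0 : ∫ z, (f z * f z) * ψ (‖z - y‖ ^ 2) ≤ 0 := by
    apply le_of_forall_pos_le_add
    intro ε hε
    refine (hle (ε / (I + 1)) (by positivity)).trans ?_
    rw [div_mul_eq_mul_div, div_le_iff₀ (by positivity)]
    nlinarith
  by_contra hne
  have hpos : 0 < ∫ z, (f z * f z) * ψ (‖z - y‖ ^ 2) := by
    apply Continuous.integral_pos_of_hasCompactSupport_nonneg_nonzero (x := x)
    · fun_prop
    · exact cpt_psi (fun z => f z * f z) y ψ R hR hψ0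
    · exact fun z => mul_nonneg (mul_self_nonneg _) (hψn _)
    · refine mul_ne_zero (mul_ne_zero hne hne) (ne_of_gt ?_)
      rw [hψd]
      refine lt_max_of_lt_left ?_
      rw [dist_eq_norm] at hR1
      have : ‖x - y‖ ^ 2 < R ^ 2 := by gcongr
      linarith
  linarith

lemma MZ_of_means {n : ℕ} (hn : 1 ≤ n) (ω : Set (EE n)) (T : ℝ) (f : EE n → ℝ)
    (hf : Continuous f)
    (h : ∀ y ∈ ω, ∀ r, 0 < r → r < T → 
      ∫ σ : sphere (0 : EE n) 1, f (y + r • (σ : EE n)) ∂(sph n) = 0) : MZ ω T f := by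
  intro y hy ψ hψ R hR hRT hψ0
  have : Nonempty (Fin n) := ⟨⟨0, hn⟩⟩
  have : Nontrivial (EE n) := inferInstance
  set k : EE n → ℝ := fun x => f (y + x) * ψ (‖x‖ ^ 2) with hk
  have hki : Integrable k := by
    have := integrable_psi (fun z => f (y + z)) (by fun_prop) 0 ψ hψ R hR hψ0
    simpa using this
  have e1 : ∫ z, f z * ψ (‖z - y‖ ^ 2) = ∫ x, k x := by
    rw [← integral_add_left_eq_self _ y]
    simp [hk]
  rw [e1]
  have mp := (volume : Measure (EE n)).measurePreserving_homeomorphUnitSphereProd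
  have hemb := (homeomorphUnitSphereProd (EE n)).measurableEmbedding
  have e2 : ∫ x, k x = ∫ x : ({(0)}ᶜ : Set (EE n)), k x ∂((volume : Measure (EE n)).comap (↑)) := by
    rw [integral_subtype_comap (measurableSet_singleton _).compl k, restrict_compl_singleton]
  let k' : sphere (0 : EE n) 1 × Ioi (0 : ℝ) → ℝ := fun p => k ((p.2 : ℝ) • (p.1 : EE n))
  have hkk : ∀ x : ({(0)}ᶜ : Set (EE n)), k x = k' (homeomorphUnitSphereProd (EE n) x) := by
    intro x
    simp only [k']
    congr 1
    have hx : ‖(x : EE n)‖ ≠ 0 := norm_ne_zero_iff.2 x.2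
    simp [smul_smul, hx]
  have e3 : ∫ x : ({(0)}ᶜ : Set (EE n)), k x ∂((volume : Measure (EE n)).comap (↑)) = 
     ∫ p, k' p ∂((sph n).prod (Measure.volumeIoiPow (Module.finrank ℝ (EE n) - 1))) := by
    rw [← mp.integral_comp hemb]
    simp only [hkk]
  have hint : Integrable k' ((sph n).prod (Measure.volumeIoiPow (Module.finrank ℝ (EE n) - 1))) := by
    rw [← mp.integrable_comp_emb hemb]
    have h1 : Integrable (fun x : ({(0)}ᶜ : Set (EE n)) => k x) ((volume : Measure (EE n)).comap (↑)) := by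
      have := (MeasurableEmbedding.subtype_coe (measurableSet_singleton (0 : EE n)).compl).integrable_map_iff
        (g := k) (μ := (volume : Measure (EE n)).comap (↑))
      refine this.1 ?_
      rw [map_comap_subtype_coe (measurableSet_singleton _).compl]
      exact hki.restrict
    exact h1.congr (Eventually.of_forall hkk)
  rw [e2, e3, integral_prod_symm _ hint]
  apply integral_eq_zero_of_ae
  refine Eventually.of_forall fun r => ?_
  have hr : (0 : ℝ) < r := r.2
  have e4 : ∀ σ : sphere (0 : EE n) 1, k' (σ, r) = f (y + (r : ℝ) • (σ : EE n)) * ψ ((r : ℝ) ^ 2) := by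
    intro σ
    simp [k', hk, norm_smul]
  simp only [e4, Pi.zero_apply]
  rw [integral_mul_const]
  by_cases hrR : (r : ℝ) < R
  · rw [h y hy r hr (hrR.trans hRT), zero_mul]
  · rw [hψ0 _ (by push Not at hrR; gcongr), mul_zero]

lemma cmp_lem (g g' h h' : ℝ → ℝ) (a b : ℝ) (hab : a ≤ b) (hg : ContinuousOn g (Icc a b))
    (hd : ∀ x ∈ Ioo a b, HasDerivAt g (g' x) x) (hh : ∀ x, HasDerivAt h (h' x) x)
    (hle : ∀ x ∈ Ioo a b, |g' x| ≤ h' x) : |g b| ≤ |g a| + (h b - h a) := by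
  have hhc : ContinuousOn h (Icc a b) := fun x _ => (hh x).continuousAt.continuousWithinAt
  have m1 : MonotoneOn (fun x => h x - g x) (Icc a b) := by
    apply monotoneOn_of_deriv_nonneg (convex_Icc a b) (hhc.sub hg)
    · rw [interior_Icc]
      exact fun x hx => ((hh x).sub (hd x hx)).differentiableAt.differentiableWithinAt
    · rw [interior_Icc]
      intro x hx
      rw [((hh x).sub (hd x hx)).deriv]
      linarith [(abs_le.1 (hle x hx)).2]
  have m2 : MonotoneOn (fun x => h x + g x) (Icc a b) := by
    apply monotoneOn_of_deriv_nonneg (convex_Icc a b) (hhc.add hg)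
    · rw [interior_Icc]
      exact fun x hx => ((hh x).add (hd x hx)).differentiableAt.differentiableWithinAt
    · rw [interior_Icc]
      intro x hx
      rw [((hh x).add (hd x hx)).deriv]
      linarith [(abs_le.1 (hle x hx)).1]
  have h1 := m1 (left_mem_Icc.2 hab) (right_mem_Icc.2 hab) hab
  have h2 := m2 (left_mem_Icc.2 hab) (right_mem_Icc.2 hab) hab
  simp only at h1 h2
  rw [abs_le]
  constructor
  · linarith [neg_abs_le (g a)]
  · linarith [le_abs_self (g a)]

lemma char_lem (P Q : ℝ → ℝ → ℝ) (ε T k : ℝ) (hε : 0 < ε) (hk : 0 ≤ k)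
    (hPc : Continuous (Function.uncurry P)) (hQc : Continuous (Function.uncurry Q))
    (hP0 : ∀ t ∈ Icc 0 T, P t ε = 0) (hQ0 : ∀ t ∈ Icc 0 T, Q t ε = 0)
    (hrefl : ∀ r, Q 0 r = - P 0 r)
    (hP' : ∀ a ρ, ε ≤ ρ → 0 < a - ρ → a - ρ < T → HasDerivAt (fun ρ => P (a - ρ) ρ)
      (-(k / ρ) * ((P (a - ρ) ρ + Q (a - ρ) ρ) / 2)) ρ)
    (hQ' : ∀ a ρ, ε ≤ ρ → 0 < a + ρ → a + ρ < T → HasDerivAt (fun ρ => Q (a + ρ) ρ)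
      (-(k / ρ) * ((P (a + ρ) ρ + Q (a + ρ) ρ) / 2)) ρ) :
    ∀ t r, 0 ≤ t → ε ≤ r → t + r ≤ T → P t r = 0 ∧ Q t r = 0 := by
  have hK : IsCompact (Icc (0:ℝ) T ×ˢ Icc (0:ℝ) T) := isCompact_Icc.prod isCompact_Icc
  obtain ⟨B1, hB1⟩ := hK.exists_bound_of_continuousOn hPc.continuousOn
  obtain ⟨B2, hB2⟩ := hK.exists_bound_of_continuousOn hQc.continuousOn
  set B := max (max B1 B2) 0 with hB
  have hBn : 0 ≤ B := le_max_right _ _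
  set c := k / ε with hc
  have hcn : 0 ≤ c := by positivity
  set H : ℕ → ℝ → ℝ := fun j r => B * ((c * (r - ε)) ^ j / (j.factorial : ℝ)) with hH
  have hHd : ∀ j r, HasDerivAt (H (j + 1)) (c * H j r) r := by
    intro j r
    have h1 : HasDerivAt (fun r => c * (r - ε)) c r := by
      simpa using ((hasDerivAt_id r).sub_const ε).const_mul c
    have h2 := ((h1.pow (j + 1)).div_const ((j + 1).factorial : ℝ)).const_mul B
    refine h2.congr_deriv ?_
    simp only [hH, Nat.factorial_succ]
    push_cast
    have : (j.factorial : ℝ) ≠ 0 := by positivity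
    field_simp
  have hHε : ∀ j, H (j + 1) ε = 0 := by intro j; simp [hH]
  have hHn : ∀ j r, ε ≤ r → 0 ≤ H j r := by
    intro j r hr
    have : 0 ≤ r - ε := by linarith
    simp only [hH]; positivity
  have hder : ∀ j ρ x y, ε ≤ ρ → |x| ≤ H j ρ → |y| ≤ H j ρ →
      |-(k / ρ) * ((x + y) / 2)| ≤ c * H j ρ := by
    intro j ρ x y hρ hx hy
    have h1 : k / ρ ≤ c := by rw [hc]; gcongr
    have h0 : 0 ≤ k / ρ := by have : 0 < ρ := hε.trans_le hρ
                              positivity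
    rw [abs_mul, abs_neg, abs_of_nonneg h0]
    have h2 : |(x + y) / 2| ≤ H j ρ := by
      rw [abs_le] at *
      constructor <;> linarith [hx.1, hx.2, hy.1, hy.2]
    exact mul_le_mul h1 h2 (abs_nonneg _) hcn
  have main : ∀ j : ℕ, ∀ t r, 0 ≤ t → ε ≤ r → t + r ≤ T → |P t r| ≤ H j r ∧ |Q t r| ≤ H j r := by
    intro j
    induction j with
    | zero =>
      intro t r ht hr htr
      have hm : (t, r) ∈ Icc (0:ℝ) T ×ˢ Icc (0:ℝ) T := ⟨⟨ht, by linarith⟩, ⟨by linarith, by linarith⟩⟩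
      have h1 := hB1 _ hm
      have h2 := hB2 _ hm
      simp only [Function.uncurry, Real.norm_eq_abs] at h1 h2
      simp only [hH, pow_zero, Nat.factorial_zero, Nat.cast_one, div_one, mul_one]
      exact ⟨h1.trans ((le_max_left _ _).trans (le_max_left _ _)),
        h2.trans ((le_max_right _ _).trans (le_max_left _ _))⟩
    | succ j ih =>
      have hPs : ∀ t r, 0 ≤ t → ε ≤ r → t + r ≤ T → |P t r| ≤ H (j + 1) r := by
        intro t r ht hr htr
        have := cmp_lem (fun ρ => P (t + r - ρ) ρ) 
          (fun ρ => -(k / ρ) * ((P (t + r - ρ) ρ + Q (t + r - ρ) ρ) / 2)) (H (j + 1)) (fun ρ => c * H j ρ)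
          ε r hr 
          ((hPc.comp (f := fun ρ : ℝ => (t + r - ρ, ρ)) (by fun_prop)).continuousOn)
          (fun ρ hρ => hP' _ _ hρ.1.le (by linarith [hρ.2]) (by linarith [hρ.1]))
          (hHd j)
          (fun ρ hρ => by
            obtain ⟨h1, h2⟩ := ih (t + r - ρ) ρ (by linarith [hρ.2]) hρ.1.le (by linarith)
            exact hder j ρ _ _ hρ.1.le h1 h2)
        simp only [hP0 (t + r - ε) ⟨by linarith, by linarith⟩, hHε, abs_zero, zero_add, sub_zero,
          add_sub_cancel_right] at this
        exact this
      intro t r ht hr htr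
      refine ⟨hPs t r ht hr htr, ?_⟩
      have gen : ∀ ρ0, ε ≤ ρ0 → r - t ≤ ρ0 → ρ0 ≤ r → 
          |Q (t - r + ρ0) ρ0| ≤ H (j + 1) ρ0 → |Q t r| ≤ H (j + 1) r := by
        intro ρ0 h1 h2 h3 h4
        have := cmp_lem (fun ρ => Q (t - r + ρ) ρ) 
          (fun ρ => -(k / ρ) * ((P (t - r + ρ) ρ + Q (t - r + ρ) ρ) / 2)) (H (j + 1)) (fun ρ => c * H j ρ)
          ρ0 r h3 
          ((hQc.comp (f := fun ρ : ℝ => (t - r + ρ, ρ)) (by fun_prop)).continuousOn)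
          (fun ρ hρ => hQ' _ _ (by linarith [hρ.1]) (by linarith [hρ.1]) (by linarith [hρ.2]))
          (hHd j)
          (fun ρ hρ => by
            obtain ⟨h1, h2⟩ := ih (t - r + ρ) ρ (by linarith [hρ.1]) (by linarith [hρ.1]) 
              (by linarith [hρ.2])
            exact hder j ρ _ _ (by linarith [hρ.1]) h1 h2)
        simp only [sub_add_cancel] at this
        linarith
      by_cases hc' : ε ≤ r - t
      · refine gen (r - t) hc' le_rfl (by linarith) ?_
        rw [show t - r + (r - t) = 0 by ring, hrefl, abs_neg]
        exact hPs 0 (r - t) le_rfl hc' (by linarith)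
      · push Not at hc'
        refine gen ε le_rfl hc'.le hr ?_
        rw [hQ0 _ ⟨by linarith, by linarith⟩, hHε, abs_zero]
  intro t r ht hr htr
  have hlim : Tendsto (fun j => H j r) atTop (𝓝 0) := by
    have := (FloorSemiring.tendsto_pow_div_factorial_atTop (c * (r - ε))).const_mul B
    simpa [hH] using this
  constructor
  · exact abs_nonpos_iff.1 (ge_of_tendsto' hlim fun j => (main j t r ht hr htr).1)
  · exact abs_nonpos_iff.1 (ge_of_tendsto' hlim fun j => (main j t r ht hr htr).2)

noncomputable abbrev SS (n : ℕ) (T : ℝ) : Set (ℝ × EE n) := Icc 0 T ×ˢ univ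

lemma SS_nhds {n : ℕ} {T t : ℝ} (ht : t ∈ Ioo 0 T) (x : EE n) : SS n T ∈ 𝓝 ((t, x) : ℝ × EE n) :=
  prod_mem_nhds (Icc_mem_nhds ht.1 ht.2) univ_mem

lemma SS_unique {n : ℕ} {T : ℝ} (hT : 0 < T) : UniqueDiffOn ℝ (SS n T) :=
  (uniqueDiffOn_Icc hT).prod uniqueDiffOn_univ

lemma inter_C2 {n : ℕ} {T t : ℝ} {u : ℝ → EE n → ℝ}
    (hreg : ContDiffOn ℝ 2 (Function.uncurry u) (SS n T)) (ht : t ∈ Ioo 0 T) (x : EE n) :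
    ContDiffAt ℝ 2 (Function.uncurry u) (t, x) :=
  (hreg (t, x) ⟨Ioo_subset_Icc_self ht, mem_univ _⟩).contDiffAt (SS_nhds ht x)

lemma slice_C2 {n : ℕ} {T t : ℝ} {u : ℝ → EE n → ℝ}
    (hreg : ContDiffOn ℝ 2 (Function.uncurry u) (SS n T)) (ht : t ∈ Ioo 0 T) :
    ContDiff ℝ 2 (u t) := by
  rw [contDiff_iff_contDiffAt]
  intro x
  exact (inter_C2 hreg ht x).comp (f := fun x : EE n => (t, x)) x (by fun_prop)

lemma fd1 {n : ℕ} {T t : ℝ} {u : ℝ → EE n → ℝ}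
    (hreg : ContDiffOn ℝ 2 (Function.uncurry u) (SS n T)) (ht : t ∈ Ioo 0 T) (x : EE n) :
    HasFDerivAt (Function.uncurry u) (fderiv ℝ (Function.uncurry u) (t, x)) (t, x) :=
  ((inter_C2 hreg ht x).differentiableAt (by norm_num)).hasFDerivAt

lemma fd2 {n : ℕ} {T t : ℝ} {u : ℝ → EE n → ℝ}
    (hreg : ContDiffOn ℝ 2 (Function.uncurry u) (SS n T)) (ht : t ∈ Ioo 0 T) (x : EE n) :
    HasFDerivAt (fderiv ℝ (Function.uncurry u))
      (fderiv ℝ (fderiv ℝ (Function.uncurry u)) (t, x)) (t, x) :=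
  (((inter_C2 hreg ht x).fderiv_right (m := 1) (by norm_num)).differentiableAt
    (by norm_num)).hasFDerivAt

lemma fd2_cont {n : ℕ} {T : ℝ} {u : ℝ → EE n → ℝ}
    (hreg : ContDiffOn ℝ 2 (Function.uncurry u) (SS n T)) :
    ContinuousOn (fderiv ℝ (fderiv ℝ (Function.uncurry u))) (Ioo 0 T ×ˢ univ) := by
  rintro ⟨t, x⟩ ⟨ht, -⟩
  have h1 := (inter_C2 hreg ht x).fderiv_right (m := 1) (by norm_num)
  have h2 := h1.fderiv_right (m := 0) (by norm_num)
  exact h2.continuousAt.continuousWithinAt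

lemma slice_fd {n : ℕ} {T t : ℝ} {u : ℝ → EE n → ℝ}
    (hreg : ContDiffOn ℝ 2 (Function.uncurry u) (SS n T)) (ht : t ∈ Ioo 0 T) (x : EE n) :
    fderiv ℝ (u t) x = (fderiv ℝ (Function.uncurry u) (t, x)).comp
      (ContinuousLinearMap.inr ℝ ℝ (EE n)) :=
  ((fd1 hreg ht x).comp (f := fun x : EE n => (t, x)) x (hasFDerivAt_prodMk_right t x)).fderiv

lemma slice_fd2 {n : ℕ} {T t : ℝ} {u : ℝ → EE n → ℝ}
    (hreg : ContDiffOn ℝ 2 (Function.uncurry u) (SS n T)) (ht : t ∈ Ioo 0 T) (x v w : EE n) :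
    fderiv ℝ (fderiv ℝ (u t)) x v w =
      fderiv ℝ (fderiv ℝ (Function.uncurry u)) (t, x) (0, v) (0, w) := by
  have e : fderiv ℝ (u t) = fun x => (fderiv ℝ (Function.uncurry u) (t, x)).comp
      (ContinuousLinearMap.inr ℝ ℝ (EE n)) := funext fun x => slice_fd hreg ht x
  rw [e]
  have h1 := (fd2 hreg ht x).comp (f := fun x : EE n => (t, x)) x (hasFDerivAt_prodMk_right t x)
  have h2 := h1.clm_comp (hasFDerivAt_const (ContinuousLinearMap.inr ℝ ℝ (EE n)) x)
  have h3 := h2.fderiv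
  simp only [Function.comp_def] at h3
  rw [h3]
  simp

lemma pdt_eq {n : ℕ} {T t : ℝ} {u : ℝ → EE n → ℝ}
    (hreg : ContDiffOn ℝ 2 (Function.uncurry u) (SS n T)) (ht : t ∈ Ioo 0 T) (x : EE n) :
    HasDerivAt (fun s => u s x) (fderiv ℝ (Function.uncurry u) (t, x) (1, 0)) t := by
  have h := (fd1 hreg ht x).comp_hasDerivAt t ((hasDerivAt_id t).prodMk (hasDerivAt_const t x))
  exact h

lemma pdt2_eq {n : ℕ} {T t : ℝ} {u : ℝ → EE n → ℝ}
    (hreg : ContDiffOn ℝ 2 (Function.uncurry u) (SS n T)) (ht : t ∈ Ioo 0 T) (x : EE n) :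
    pdt (pdt u) t x = fderiv ℝ (fderiv ℝ (Function.uncurry u)) (t, x) (1, 0) (1, 0) := by
  have e : (fun s => pdt u s x) =ᶠ[𝓝 t] fun s => fderiv ℝ (Function.uncurry u) (s, x) (1, 0) := by
    filter_upwards [Ioo_mem_nhds ht.1 ht.2] with s hs
    exact (pdt_eq hreg hs x).deriv
  show deriv (fun s => pdt u s x) t = _
  rw [e.deriv_eq]
  have h := (fd2 hreg ht x).comp_hasDerivAt t ((hasDerivAt_id t).prodMk (hasDerivAt_const t x))
  have h2 := h.clm_apply (hasDerivAt_const t ((1, 0) : ℝ × EE n))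
  have h3 := h2.deriv
  simp only [Function.comp_def, id] at h3
  rw [h3]
  simp

lemma lap_eq {n : ℕ} (f : EE n → ℝ) (x : EE n) :
    lap f x = ∑ i, fderiv ℝ (fderiv ℝ f) x (eb i) (eb i) := by
  unfold lap
  simp only [iteratedFDeriv_two_apply]
  rfl

lemma char_id {n : ℕ} {T t : ℝ} {u : ℝ → EE n → ℝ}
    (hreg : ContDiffOn ℝ 2 (Function.uncurry u) (SS n T)) (ht : t ∈ Ioo 0 T) (x : EE n)
    (hw : pdt (pdt u) t x = lap (u t) x) (s : ℝ) (hs : s * s = 1) (σ : EE n) :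
    fderiv ℝ (fderiv ℝ (Function.uncurry u)) (t, x) (-s, σ) (s, σ) =
      fderiv ℝ (fderiv ℝ (u t)) x σ σ - ∑ i, fderiv ℝ (fderiv ℝ (u t)) x (eb i) (eb i) := by
  rw [← lap_eq, ← hw, pdt2_eq hreg ht x, slice_fd2 hreg ht]
  have hsym := (inter_C2 hreg ht x).isSymmSndFDerivAt (by simp)
  set B := fderiv ℝ (fderiv ℝ (Function.uncurry u)) (t, x)
  have h1 : ((-s, σ) : ℝ × EE n) = (0, σ) - s • (1, 0) := by ext <;> simp
  have h2 : ((s, σ) : ℝ × EE n) = (0, σ) + s • (1, 0) := by ext <;> simp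
  rw [h1, h2]
  simp only [map_sub, map_add, map_smul, ContinuousLinearMap.sub_apply, ContinuousLinearMap.smul_apply, smul_eq_mul]
  rw [hsym (0, σ) (1, 0)]
  linear_combination (- B (1, 0) (1, 0)) * hs

noncomputable def DD {n : ℕ} (u : ℝ → EE n → ℝ) (T : ℝ) (z : ℝ × EE n) : (ℝ × EE n) →L[ℝ] ℝ :=
  fderivWithin ℝ (Function.uncurry u) (SS n T) (max 0 (min z.1 T), z.2)

lemma DD_cont {n : ℕ} {T : ℝ} (hT : 0 < T) {u : ℝ → EE n → ℝ}
    (hreg : ContDiffOn ℝ 2 (Function.uncurry u) (SS n T)) : Continuous (DD u T) := by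
  have h := hreg.continuousOn_fderivWithin (SS_unique hT) (by norm_num)
  rw [← continuousOn_univ]
  exact h.comp (f := fun z : ℝ × EE n => (max 0 (min z.1 T), z.2)) (by fun_prop)
    (fun z _ => ⟨⟨le_max_left _ _, max_le hT.le (min_le_right _ _)⟩, mem_univ _⟩)

lemma DD_eq {n : ℕ} {T t : ℝ} (u : ℝ → EE n → ℝ) (ht : t ∈ Icc 0 T) (x : EE n) :
    DD u T (t, x) = fderivWithin ℝ (Function.uncurry u) (SS n T) (t, x) := by
  simp [DD, min_eq_left ht.2, max_eq_right ht.1]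

lemma DD_eq' {n : ℕ} {T t : ℝ} (u : ℝ → EE n → ℝ) (ht : t ∈ Ioo 0 T) (x : EE n) :
    DD u T (t, x) = fderiv ℝ (Function.uncurry u) (t, x) := by
  rw [DD_eq u (Ioo_subset_Icc_self ht), fderivWithin_of_mem_nhds (SS_nhds ht x)]

lemma DD_fd {n : ℕ} {T t : ℝ} {u : ℝ → EE n → ℝ}
    (hreg : ContDiffOn ℝ 2 (Function.uncurry u) (SS n T)) (ht : t ∈ Ioo 0 T) (x : EE n) :
    HasFDerivAt (DD u T) (fderiv ℝ (fderiv ℝ (Function.uncurry u)) (t, x)) (t, x) := by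
  refine (fd2 hreg ht x).congr_of_eventuallyEq ?_
  filter_upwards [prod_mem_nhds (Ioo_mem_nhds ht.1 ht.2) univ_mem] with z hz
  exact DD_eq' u hz.1 z.2

lemma DD_has {n : ℕ} {T t : ℝ} {u : ℝ → EE n → ℝ}
    (hreg : ContDiffOn ℝ 2 (Function.uncurry u) (SS n T)) (ht : t ∈ Icc 0 T) (x : EE n) :
    HasFDerivWithinAt (Function.uncurry u) (DD u T (t, x)) (SS n T) (t, x) := by
  rw [DD_eq u ht]
  exact (hreg.differentiableOn (by norm_num) (t, x) ⟨ht, mem_univ _⟩).hasFDerivWithinAt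

lemma u_zero {n : ℕ} {T : ℝ} {u : ℝ → EE n → ℝ} {ω : Set (EE n)}
    (hreg : ContDiffOn ℝ 2 (Function.uncurry u) (SS n T))
    (hinit : ∀ x, u 0 x = 0) (hobs : ∀ t ∈ Ioo (0 : ℝ) T, ∀ x ∈ ω, pdt u t x = 0) :
    ∀ t ∈ Icc 0 T, ∀ x ∈ ω, u t x = 0 := by
  intro t ht x hx
  have hc : ContinuousOn (fun s => u s x) (Icc 0 T) :=
    hreg.continuousOn.comp (f := fun s : ℝ => (s, x)) (by fun_prop) (fun s hs => ⟨hs, mem_univ _⟩)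
  have h := cmp_lem (fun s => u s x) (fun s => pdt u s x) (fun _ => 0) (fun _ => 0) 0 t ht.1
    (hc.mono (Icc_subset_Icc_right ht.2))
    (fun s hs => (pdt_eq hreg ⟨hs.1, hs.2.trans_le ht.2⟩ x).differentiableAt.hasDerivAt)
    (fun s => hasDerivAt_const s 0)
    (fun s hs => by rw [hobs s ⟨hs.1, hs.2.trans_le ht.2⟩ x hx]; simp)
  simp only [hinit, abs_zero, sub_zero, add_zero] at h
  exact abs_nonpos_iff.1 h

lemma DD_zero {n : ℕ} {T : ℝ} (hT : 0 < T) {u : ℝ → EE n → ℝ} {ω : Set (EE n)} (hωo : IsOpen ω)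
    (hz : ∀ t ∈ Icc 0 T, ∀ x ∈ ω, u t x = 0) (t : ℝ) (x : EE n) (hx : x ∈ ω) :
    DD u T (t, x) = 0 := by
  unfold DD
  have ht : max 0 (min t T) ∈ Icc 0 T := ⟨le_max_left _ _, max_le hT.le (min_le_right _ _)⟩
  simp only
  generalize max 0 (min t T) = t' at ht
  have e : Function.uncurry u =ᶠ[𝓝[SS n T] (t', x)] fun _ => (0 : ℝ) := by
    filter_upwards [self_mem_nhdsWithin, mem_nhdsWithin_of_mem_nhds
      (prod_mem_nhds (univ_mem (f := 𝓝 t')) (hωo.mem_nhds hx))] with z h1 h2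
    exact hz z.1 h1.1 z.2 h2.2
  rw [e.fderivWithin_eq (hz t' ht x hx)]
  simp

lemma DD_init {n : ℕ} {T : ℝ} (hT : 0 < T) {u : ℝ → EE n → ℝ}
    (hreg : ContDiffOn ℝ 2 (Function.uncurry u) (SS n T)) (hinit : ∀ x, u 0 x = 0) (x v : EE n) :
    DD u T (0, x) (0, v) = 0 := by
  have h := (DD_has hreg (left_mem_Icc.2 hT.le) x).comp_hasFDerivAt x
    (hasFDerivAt_prodMk_right (𝕜 := ℝ) (0 : ℝ) x)
    (Eventually.of_forall fun y => ⟨left_mem_Icc.2 hT.le, mem_univ _⟩)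
  have e : (Function.uncurry u ∘ fun y : EE n => ((0 : ℝ), y)) = fun _ => (0 : ℝ) := 
    funext fun y => hinit y
  rw [e] at h
  have h2 := h.unique (hasFDerivAt_const (0 : ℝ) x)
  simpa using congrArg (fun L => L v) h2

noncomputable def NN {n : ℕ} (u : ℝ → EE n → ℝ) (T : ℝ) (y : EE n) (s t r : ℝ) : ℝ :=
  ∫ σ : sphere (0 : EE n) 1, DD u T (t, y + r • (σ : EE n)) (s, (σ : EE n)) ∂(sph n)

lemma NN_cont {n : ℕ} {T : ℝ} (hT : 0 < T) {u : ℝ → EE n → ℝ}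
    (hreg : ContDiffOn ℝ 2 (Function.uncurry u) (SS n T)) (y : EE n) (s : ℝ) :
    Continuous (Function.uncurry (NN u T y s)) := by
  have hD := DD_cont hT hreg
  have h := continuous_parametric_integral_of_continuous (μ := sph n) 
    (f := fun (p : ℝ × ℝ) (σ : sphere (0 : EE n) 1) => 
      DD u T (p.1, y + p.2 • (σ : EE n)) (s, (σ : EE n))) (by fun_prop) isCompact_univ
  simp only [Measure.restrict_univ] at h
  exact h

lemma NN_avg {n : ℕ} {T : ℝ} (hT : 0 < T) {u : ℝ → EE n → ℝ}
    (hreg : ContDiffOn ℝ 2 (Function.uncurry u) (SS n T)) (y : EE n) (t r : ℝ) :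
    (NN u T y 1 t r + NN u T y (-1) t r) / 2 = 
      ∫ σ : sphere (0 : EE n) 1, DD u T (t, y + r • (σ : EE n)) (0, (σ : EE n)) ∂(sph n) := by
  have hD := DD_cont hT hreg
  unfold NN
  rw [← integral_add (integrable_cpt _ (by fun_prop)) (integrable_cpt _ (by fun_prop)),
    ← integral_div]
  congr 1
  funext σ
  rw [← map_add, show ((1, (σ : EE n)) : ℝ × EE n) + (-1, (σ : EE n)) = (2:ℝ) • (0, (σ : EE n)) by
    ext <;> simp [two_mul], map_smul]
  simp

lemma NN_diff {n : ℕ} {T : ℝ} (hT : 0 < T) {u : ℝ → EE n → ℝ}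
    (hreg : ContDiffOn ℝ 2 (Function.uncurry u) (SS n T)) (y : EE n) (t r : ℝ) :
    (NN u T y 1 t r - NN u T y (-1) t r) / 2 = 
      ∫ σ : sphere (0 : EE n) 1, DD u T (t, y + r • (σ : EE n)) (1, 0) ∂(sph n) := by
  have hD := DD_cont hT hreg
  unfold NN
  rw [← integral_sub (integrable_cpt _ (by fun_prop)) (integrable_cpt _ (by fun_prop)),
    ← integral_div]
  congr 1
  funext σ
  rw [← map_sub, show ((1, (σ : EE n)) : ℝ × EE n) - (-1, (σ : EE n)) = (2:ℝ) • (1, 0) by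
    ext <;> simp; norm_num, map_smul]
  simp

lemma NN_deriv {n : ℕ} {T : ℝ} (hT : 0 < T) {u : ℝ → EE n → ℝ}
    (hreg : ContDiffOn ℝ 2 (Function.uncurry u) (SS n T))
    (hwave : ∀ t ∈ Icc (0 : ℝ) T, ∀ x : EE n, pdt (pdt u) t x = lap (u t) x)
    (y : EE n) (s : ℝ) (hs : s * s = 1) (a ρ : ℝ) (hρ : ρ ≠ 0) (ht : a - s * ρ ∈ Ioo 0 T) :
    HasDerivAt (fun ρ => NN u T y s (a - s * ρ) ρ) (-(((n : ℝ) - 1) / ρ) * 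
      ((NN u T y 1 (a - s * ρ) ρ + NN u T y (-1) (a - s * ρ) ρ) / 2)) ρ := by
  have hD := DD_cont hT hreg
  have hopen : IsOpen {ρ : ℝ | a - s * ρ ∈ Ioo 0 T} := isOpen_Ioo.preimage (by fun_prop)
  have key := hasDerivAt_int (sph n) 
    (fun ρ σ => DD u T (a - s * ρ, y + ρ • (σ : EE n)) (s, (σ : EE n)))
    (fun ρ σ => fderiv ℝ (fderiv ℝ (Function.uncurry u)) (a - s * ρ, y + ρ • (σ : EE n)) 
      (-s, (σ : EE n)) (s, (σ : EE n))) _ hopen ρ ht 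
    (Continuous.continuousOn (by unfold Function.uncurry; fun_prop))
    (by
      have h1 : ContinuousOn (fun p : ℝ × sphere (0 : EE n) 1 => 
          fderiv ℝ (fderiv ℝ (Function.uncurry u)) (a - s * p.1, y + p.1 • (p.2 : EE n)))
          ({ρ : ℝ | a - s * ρ ∈ Ioo 0 T} ×ˢ univ) :=
        (fd2_cont hreg).comp (f := fun p : ℝ × sphere (0 : EE n) 1 => 
          (a - s * p.1, y + p.1 • (p.2 : EE n))) (by fun_prop) (fun p hp => ⟨hp.1, mem_univ _⟩)
      exact (h1.clm_apply (g := fun p : ℝ × sphere (0 : EE n) 1 => (-s, (p.2 : EE n))) (by fun_prop)).clm_apply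
        (g := fun p : ℝ × sphere (0 : EE n) 1 => (s, (p.2 : EE n))) (by fun_prop))
    (by
      intro r hr σ
      have hl : HasDerivAt (fun r : ℝ => (a - s * r, y + r • (σ : EE n))) (-s, (σ : EE n)) r := by
        refine HasDerivAt.prodMk ?_ ?_
        · simpa using ((hasDerivAt_id r).const_mul s).const_sub a
        · simpa using ((hasDerivAt_id r).smul_const (σ : EE n)).const_add y
      have h := (DD_fd hreg hr (y + r • (σ : EE n))).comp_hasDerivAt r hl
      have h2 := h.clm_apply (hasDerivAt_const r ((s, (σ : EE n)) : ℝ × EE n))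
      simpa [Function.comp_def] using h2)
  refine key.congr_deriv ?_
  rw [NN_avg hT hreg]
  have d := darboux (u (a - s * ρ)) (slice_C2 hreg ht) y ρ hρ
  have e : ∀ σ : sphere (0 : EE n) 1, DD u T (a - s * ρ, y + ρ • (σ : EE n)) (0, (σ : EE n)) =
      fderiv ℝ (u (a - s * ρ)) (y + ρ • (σ : EE n)) σ := by
    intro σ
    rw [DD_eq' u ht, slice_fd hreg ht]
    rfl
  simp only [e]
  rw [← d]
  congr 1
  funext σ
  exact char_id hreg ht _ (hwave _ (Ioo_subset_Icc_self ht) _) s hs σ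

lemma wave_means {n : ℕ} (hn : 1 ≤ n) {T : ℝ} (hT : 0 < T) {u : ℝ → EE n → ℝ} {ω : Set (EE n)} (hωo : IsOpen ω)
    (hreg : ContDiffOn ℝ 2 (Function.uncurry u) (SS n T))
    (hwave : ∀ t ∈ Icc (0 : ℝ) T, ∀ x : EE n, pdt (pdt u) t x = lap (u t) x)
    (hinit : ∀ x, u 0 x = 0) (hobs : ∀ t ∈ Ioo (0 : ℝ) T, ∀ x ∈ ω, pdt u t x = 0)
    (y : EE n) (hy : y ∈ ω) (r : ℝ) (hr : 0 < r) (hrT : r < T) :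
    ∫ σ : sphere (0 : EE n) 1, DD u T (0, y + r • (σ : EE n)) (1, 0) ∂(sph n) = 0 := by
  obtain ⟨ε, hε, hεω⟩ := Metric.nhds_basis_closedBall.mem_iff.1 (hωo.mem_nhds hy)
  have hz := u_zero hreg hinit hobs
  have hmem : ∀ r, 0 < r → r ≤ ε → ∀ σ : sphere (0 : EE n) 1, y + r • (σ : EE n) ∈ ω := by
    intro r hr hrε σ
    apply hεω
    have : ‖(σ : EE n)‖ = 1 := by simpa using σ.2
    rw [mem_closedBall, dist_eq_norm, add_sub_cancel_left, norm_smul, this, mul_one,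
      Real.norm_of_nonneg hr.le]
    exact hrε
  by_cases hrε : r ≤ ε
  · simp [DD_zero hT hωo hz 0 _ (hmem r hr hrε _)]
  push Not at hrε
  have hN0 : ∀ s t, NN u T y s t ε = 0 := by
    intro s t
    simp [NN, DD_zero hT hωo hz _ _ (hmem ε hε le_rfl _)]
  have hn' : (1 : ℝ) ≤ n := by exact_mod_cast hn
  have main := char_lem (NN u T y 1) (NN u T y (-1)) ε T ((n : ℝ) - 1) hε (by linarith)
    (NN_cont hT hreg y 1) (NN_cont hT hreg y (-1)) (fun t _ => hN0 _ _) (fun t _ => hN0 _ _)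
    (fun r => by
      have h := NN_avg hT hreg y 0 r
      simp only [DD_init hT hreg hinit, integral_zero] at h
      linarith)
    (fun a ρ h1 h2 h3 => by
      have := NN_deriv hT hreg hwave y 1 (by norm_num) a ρ (by linarith) (by rw [one_mul]; exact ⟨h2, h3⟩)
      simpa only [one_mul] using this)
    (fun a ρ h1 h2 h3 => by
      have := NN_deriv hT hreg hwave y (-1) (by norm_num) a ρ (by linarith) (by rw [neg_mul, one_mul, sub_neg_eq_add]; exact ⟨h2, h3⟩)
      simpa only [neg_mul, one_mul, sub_neg_eq_add] using this)
    0 r le_rfl hrε.le (by linarith)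
  rw [← NN_diff hT hreg, main.1, main.2]
  simp

theorem unique_continuation_free_wave (n : ℕ) (hn : 1 ≤ n)
    (ω : Set (EuclideanSpace ℝ (Fin n))) (hωne : ω.Nonempty) (hωo : IsOpen ω)
    (T : ℝ) (hT : 0 < T) (u : ℝ → EuclideanSpace ℝ (Fin n) → ℝ)
    -- u is of class C² on [0,T] × ℝⁿ
    (hreg : ContDiffOn ℝ 2 (Function.uncurry u) (Set.Icc 0 T ×ˢ (Set.univ : Set (EuclideanSpace ℝ (Fin n)))))
    -- u solves the free wave equation on [0,T] × ℝⁿ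
    (hwave : ∀ t ∈ Set.Icc (0 : ℝ) T, ∀ x : EuclideanSpace ℝ (Fin n),
      pdt (pdt u) t x = lap (u t) x)
    -- vanishing initial position
    (hinit : ∀ x : EuclideanSpace ℝ (Fin n), u 0 x = 0)
    -- observation: ∂ₜu vanishes on (0,T) × ω
    (hobs : ∀ t ∈ Set.Ioo (0 : ℝ) T, ∀ x ∈ ω, pdt u t x = 0) :
    ∀ x : EuclideanSpace ℝ (Fin n), Metric.infDist x ω < T → pdt u 0 x = 0 := by
  intro x hx
  obtain ⟨y, hy, hxy⟩ := (Metric.infDist_lt_iff hωne).1 hx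
  have hD := DD_cont hT hreg
  have hfc : Continuous fun x : EE n => DD u T (0, x) (1, 0) := by fun_prop
  have hf := MZ_zero ω hωo T _ hfc (MZ_of_means hn ω T _ hfc
    (fun y hy r hr hrT => wave_means hn hT hωo hreg hwave hinit hobs y hy r hr hrT)) x y hy hxy
  by_cases hd : DifferentiableAt ℝ (fun s => u s x) 0
  · have h1 := hd.hasDerivAt.hasDerivWithinAt (s := Icc 0 T)
    have h2 := (DD_has hreg (left_mem_Icc.2 hT.le) x).comp_hasDerivWithinAt (t := SS n T)
      (0 : ℝ) (((hasDerivAt_id (0 : ℝ)).prodMk (hasDerivAt_const (0 : ℝ) x)).hasDerivWithinAt (s := Icc 0 T))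
      (fun s hs => ⟨hs, mem_univ _⟩)
    have h3 := (uniqueDiffOn_Icc hT 0 (left_mem_Icc.2 hT.le)).eq_deriv _ h1 h2
    exact h3.trans hf
  · exact deriv_zero_of_not_differentiableAt hd
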